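/- If C is a Haar positive closed convex set in a separable Banach space X, then some bounded piece C ∩ nB_X (n a positive integer) is Haar positive; consequently, since Haar positive closed bounded convex sets are compactivorous, C itself is compactivorous. -/

import Mathlib

/-- `E` is compactivorous. -/
def Compactivorous {X : Type*} [NormedAddCommGroup X] [NormedSpace ℝ X] (E : Set X) : Prop :=
  ∀ K : Set X, IsCompact K → ∃ (z : X) (δ : ℝ), 0 < δ ∧ (fun k => z + δ • k) '' K ⊆ E

/-- `E` is Haar null. -/
def HaarNull {X : Type*} [NormedAddCommGroup X] [MeasurableSpace X] (E : Set X) : Prop :=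
  ∃ μ : MeasureTheory.Measure X, MeasureTheory.IsProbabilityMeasure μ ∧
    ∀ x : X, μ ((fun e => x + e) '' E) = 0

open MeasureTheory in
/-- A Haar null Borel set of a separable space is witnessed by measures concentrated on
arbitrarily small balls around the origin. -/
theorem HaarNull.exists_measure_ae_norm_le {X : Type*} [NormedAddCommGroup X]
    [TopologicalSpace.SeparableSpace X] [MeasurableSpace X] [BorelSpace X] {E : Set X}
    (hE : HaarNull E) (hmeas : MeasurableSet E) {ε : ℝ} (hε : 0 < ε) :
    ∃ μ : Measure X, IsProbabilityMeasure μ ∧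
      (∀ x : X, μ ((fun e => x + e) '' E) = 0) ∧ ∀ᵐ y ∂μ, ‖y‖ ≤ ε := by
  have := UniformSpace.secondCountable_of_separable X
  obtain ⟨μ, hμ, hnull⟩ := hE
  obtain ⟨z, hz⟩ : ∃ z : X, μ (Metric.closedBall z ε) ≠ 0 := by
    by_contra! h
    have huniv : μ Set.univ = 0 := measure_null_of_locally_null _ fun z _ =>
      ⟨Metric.closedBall z ε, mem_nhdsWithin_of_mem_nhds (Metric.closedBall_mem_nhds z hε), h z⟩
    simp at huniv
  have hcond : IsProbabilityMeasure (ProbabilityTheory.cond μ (Metric.closedBall z ε)) :=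
    ProbabilityTheory.cond_isProbabilityMeasure hz
  have hsub : Measurable fun y : X => y - z := by fun_prop
  refine ⟨(ProbabilityTheory.cond μ (Metric.closedBall z ε)).map fun y => y - z,
    Measure.isProbabilityMeasure_map hsub.aemeasurable, fun x => ?_, ?_⟩
  · have himage : MeasurableSet ((fun e => x + e) '' E) := by
      rw [Set.image_add_left]
      exact (measurable_const_add (-x)) hmeas
    rw [Measure.map_apply hsub himage]
    refine ProbabilityTheory.cond_absolutelyContinuous (measure_mono_null ?_ (hnull (z + x)))
    rintro y ⟨e, he, hey⟩
    refine ⟨e, he, ?_⟩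
    dsimp only at hey ⊢
    rw [add_assoc, hey]
    abel
  · rw [ae_map_iff hsub.aemeasurable (measurableSet_le measurable_norm measurable_const)]
    filter_upwards [ProbabilityTheory.ae_cond_mem Metric.isClosed_closedBall.measurableSet]
      with y hy
    rwa [← dist_eq_norm]

open MeasureTheory in
/-- Resampling one coordinate independently preserves a product measure. -/
theorem MeasureTheory.Measure.map_update_prod_infinitePi {ι : Type*} [DecidableEq ι]
    {X : ι → Type*} [∀ i, MeasurableSpace (X i)] (μ : ∀ i, Measure (X i))
    [∀ i, IsProbabilityMeasure (μ i)] (i : ι) :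
    ((Measure.infinitePi μ).prod (μ i)).map
      (fun p : (∀ j, X j) × X i => Function.update p.1 i p.2) = Measure.infinitePi μ := by
  have hupd : Measurable fun p : (∀ j, X j) × X i => Function.update p.1 i p.2 :=
    measurable_update'
  refine Measure.eq_infinitePi μ fun s t ht => ?_
  rw [Measure.map_apply hupd (.pi s.countable_toSet fun j _ => ht j)]
  by_cases hi : i ∈ s
  · have hpre : (fun p : (∀ j, X j) × X i => Function.update p.1 i p.2) ⁻¹'
        Set.pi s t = Set.pi (s.erase i : Finset ι) t ×ˢ t i := by
      ext ⟨ω, x⟩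
      simp only [Set.mem_preimage, Set.mem_pi, Set.mem_prod, Finset.mem_coe, Finset.mem_erase]
      refine ⟨fun h => ⟨fun j hj => by simpa [hj.1] using h j hj.2, by simpa using h i hi⟩,
        fun h j hj => ?_⟩
      rcases eq_or_ne j i with rfl | hji
      · simpa using h.2
      · simpa [hji] using h.1 j ⟨hji, hj⟩
    rw [hpre, Measure.prod_prod, Measure.infinitePi_pi _ fun j _ => ht j,
      Finset.prod_erase_mul _ _ hi]
  · have hpre : (fun p : (∀ j, X j) × X i => Function.update p.1 i p.2) ⁻¹'
        Set.pi s t = Set.pi s t ×ˢ Set.univ := by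
      ext ⟨ω, x⟩
      simp only [Set.mem_preimage, Set.mem_pi, Set.mem_prod, Finset.mem_coe, Set.mem_univ,
        and_true]
      refine forall₂_congr fun j hj => ?_
      rw [Function.update_of_ne (ne_of_mem_of_not_mem hj hi)]
    rw [hpre, Measure.prod_prod, Measure.infinitePi_pi _ fun j _ => ht j, measure_univ, mul_one]

open MeasureTheory in
/-- A countable union of Haar null Borel sets is Haar null. -/
theorem HaarNull.iUnion {X : Type*} [NormedAddCommGroup X] [CompleteSpace X]
    [TopologicalSpace.SeparableSpace X] [MeasurableSpace X] [BorelSpace X] {E : ℕ → Set X}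
    (hmeas : ∀ n, MeasurableSet (E n)) (hE : ∀ n, HaarNull (E n)) : HaarNull (⋃ n, E n) := by
  have := UniformSpace.secondCountable_of_separable X
  choose μ hμ hnull hsmall using fun n : ℕ =>
    (hE n).exists_measure_ae_norm_le (hmeas n) (ε := (1 / 2 : ℝ) ^ n) (by positivity)
  obtain ⟨g, hgm, hgle, hgid⟩ : ∃ g : ℕ → X → X, (∀ n, Measurable (g n)) ∧
      (∀ n x, ‖g n x‖ ≤ (1 / 2 : ℝ) ^ n) ∧ ∀ n x, ‖x‖ ≤ (1 / 2 : ℝ) ^ n → g n x = x := by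
    refine ⟨fun n => (Metric.closedBall 0 ((1 / 2 : ℝ) ^ n)).indicator id,
      fun n => measurable_id.indicator Metric.isClosed_closedBall.measurableSet, fun n x => ?_,
      fun n x hx => Set.indicator_of_mem (mem_closedBall_zero_iff.2 hx) _⟩
    dsimp only
    by_cases hx : x ∈ Metric.closedBall (0 : X) ((1 / 2 : ℝ) ^ n)
    · rw [Set.indicator_of_mem hx]
      exact mem_closedBall_zero_iff.1 hx
    · rw [Set.indicator_of_notMem hx, norm_zero]
      positivity
  have hsum (ω : ℕ → X) : Summable fun n => g n (ω n) :=
    .of_norm_bounded summable_geometric_two fun n => hgle n (ω n)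
  let S (ω : ℕ → X) : X := ∑' n, g n (ω n)
  have hpartial (N : ℕ) : Measurable fun ω : ℕ → X => ∑ n ∈ Finset.range N, g n (ω n) := by
    fun_prop
  have hS : Measurable S := measurable_of_tendsto_metrizable hpartial
    (tendsto_pi_nhds.2 fun ω => (hsum ω).hasSum.tendsto_sum_nat)
  have hSupd (n : ℕ) (ω : ℕ → X) (x : X) :
      S (Function.update ω n x) = g n x + (S ω - g n (ω n)) := by
    have h := (hsum ω).hasSum.update n (g n x)
    have heq : (fun k => g k (Function.update ω n x k)) =
        Function.update (fun k => g k (ω k)) n (g n x) := by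
      ext k
      rcases eq_or_ne k n with rfl | hk <;> simp [*]
    rw [← heq] at h
    rw [show S (Function.update ω n x) = _ from h.tsum_eq]
    abel
  refine ⟨(Measure.infinitePi μ).map S, Measure.isProbabilityMeasure_map hS.aemeasurable,
    fun x => ?_⟩
  rw [Set.image_iUnion]
  refine measure_iUnion_null fun n => ?_
  have himage : MeasurableSet ((fun e => x + e) '' E n) := by
    rw [Set.image_add_left]
    exact (measurable_const_add (-x)) (hmeas n)
  have hupd : Measurable fun p : (ℕ → X) × X => Function.update p.1 n p.2 := measurable_update'
  rw [Measure.map_apply hS himage, ← Measure.map_update_prod_infinitePi μ n,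
    Measure.map_apply hupd (hS himage), Measure.measure_prod_null (hupd (hS himage))]
  refine .of_forall fun ω => measure_eq_zero_iff_ae_notMem.2 ?_
  filter_upwards [hsmall n, measure_eq_zero_iff_ae_notMem.1
    (hnull n (x - (S ω - g n (ω n))))] with y hy hyE ⟨e, he, hye⟩
  refine hyE ⟨e, he, ?_⟩
  dsimp only at hye ⊢
  rw [hSupd, hgid n y hy] at hye
  rw [sub_add_eq_add_sub, hye, add_sub_cancel_right]

/-- A superset of a compactivorous set is compactivorous. -/
theorem Compactivorous.mono {X : Type*} [NormedAddCommGroup X] [NormedSpace ℝ X] {D E : Set X}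
    (hD : Compactivorous D) (hDE : D ⊆ E) : Compactivorous E := fun K hK =>
  let ⟨z, δ, hδ, h⟩ := hD K hK
  ⟨z, δ, hδ, h.trans hDE⟩

/-- if `C` is a Haar positive closed convex set in a separable Banach
space, then some bounded piece `C ∩ n B_X` is Haar positive; consequently (using the
theorem that Haar positive closed bounded convex sets are compactivorous) `C` itself
is compactivorous. -/
theorem statement13 {X : Type*} [NormedAddCommGroup X] [NormedSpace ℝ X] [CompleteSpace X]
    [TopologicalSpace.SeparableSpace X] [MeasurableSpace X] [BorelSpace X]
    (hthm : ∀ D : Set X, IsClosed D → Convex ℝ D → Bornology.IsBounded D →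
      ¬ HaarNull D → Compactivorous D)
    (C : Set X) (hC : IsClosed C) (hconv : Convex ℝ C) (hpos : ¬ HaarNull C) :
    (∃ n : ℕ, 0 < n ∧ ¬ HaarNull (C ∩ Metric.closedBall (0 : X) n)) ∧
      Compactivorous C := by
  have hex : ∃ n : ℕ, 0 < n ∧ ¬ HaarNull (C ∩ Metric.closedBall (0 : X) n) := by
    by_contra! h
    refine hpos ?_
    have hunion : C = ⋃ n : ℕ, C ∩ Metric.closedBall (0 : X) (n + 1 : ℕ) := by
      rw [← Set.inter_iUnion, eq_comm, Set.inter_eq_left]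
      intro x _
      obtain ⟨n, hn⟩ := exists_nat_ge ‖x‖
      refine Set.mem_iUnion.2 ⟨n, mem_closedBall_zero_iff.2 (hn.trans ?_)⟩
      exact_mod_cast n.le_succ
    rw [hunion]
    exact HaarNull.iUnion (fun n => (hC.inter Metric.isClosed_closedBall).measurableSet)
      fun n => h (n + 1) n.succ_pos
  obtain ⟨n, hn, hnull⟩ := hex
  exact ⟨⟨n, hn, hnull⟩, (hthm _ (hC.inter Metric.isClosed_closedBall)
    (hconv.inter (convex_closedBall 0 _))
    (Metric.isBounded_closedBall.subset Set.inter_subset_right) hnull).mono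
      Set.inter_subset_left⟩
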